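/- Let N ≥ 2. For any sequence of loss vectors ℓ_1, ℓ_2, … ∈ [0,1]^N and any T ∈ ℕ, the FTRL-CARL algorithm (FTRL with regularizer −H_B and regularizer scaling η_t = 2/√t, i.e., w_{t+1} minimizes ⟨L_t, w⟩ − (√(t+1)/2)·H_B(w) over the simplex) satisfies the deterministic regret bound: Σ_{t=1}^T ⟨ℓ_t, w_t⟩ − min_{i∈[N]} Σ_{t=1}^T ℓ_t(i) ≤ √(2·T·log N). -/

import Mathlib

/-- The error function `erf(z) = (2/√π)∫_0^z e^{-u²} du`. -/
noncomputable def erf (z : ℝ) : ℝ :=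
  2 / Real.sqrt Real.pi * ∫ u in (0 : ℝ)..z, Real.exp (-u ^ 2)

/-- `h_B(x) = x·√(2·log(1/x)) − √(π/2)·erf(√(log(1/x))) + x·(N−1)·√(π/2)` for `x ∈ (0,1]`,
with `h_B(0) = −√(π/2)`. -/
noncomputable def hB (N : ℕ) (x : ℝ) : ℝ :=
  if x = 0 then -Real.sqrt (Real.pi / 2)
  else x * Real.sqrt (2 * Real.log (1 / x))
    - Real.sqrt (Real.pi / 2) * erf (Real.sqrt (Real.log (1 / x)))
    + x * ((N : ℝ) - 1) * Real.sqrt (Real.pi / 2)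

noncomputable def HB {N : ℕ} (w : Fin N → ℝ) : ℝ := ∑ i, hB N (w i)

/-- FTRL-CARL with parameter `c > 0`: given losses `ℓ_1, ℓ_2, …` with cumulative losses
`L_t = Σ_{s=1}^t ℓ_s`, the weights satisfy
`w_{t+1} ∈ argmin_{w ∈ Δ_N} { ⟨L_t, w⟩ − (√(t+1)/c)·H_B(w) }`. -/
def IsCarl (N : ℕ) (c : ℝ) (ℓ : ℕ → Fin N → ℝ) (w : ℕ → Fin N → ℝ) : Prop :=
  ∀ t : ℕ, w (t + 1) ∈ stdSimplex ℝ (Fin N) ∧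
    ∀ v ∈ stdSimplex ℝ (Fin N),
      (∑ i, (∑ s ∈ Finset.Icc 1 t, ℓ s i) * w (t + 1) i)
          - Real.sqrt ((t : ℝ) + 1) / c * HB (w (t + 1)) ≤
        (∑ i, (∑ s ∈ Finset.Icc 1 t, ℓ s i) * v i)
          - Real.sqrt ((t : ℝ) + 1) / c * HB v

open Real Set Filter Topology MeasureTheory in
lemma erf_hasDerivAt (z : ℝ) : HasDerivAt erf (2 / Real.sqrt Real.pi * Real.exp (-z ^ 2)) z := by
  unfold erf
  apply HasDerivAt.const_mul
  have hc : Continuous fun u : ℝ => Real.exp (-u ^ 2) := by fun_prop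
  exact intervalIntegral.integral_hasDerivAt_right (hc.intervalIntegrable _ _)
    (hc.stronglyMeasurableAtFilter _ _) hc.continuousAt

lemma erf_continuous : Continuous erf :=
  continuous_iff_continuousAt.2 fun z => (erf_hasDerivAt z).continuousAt

open Real Set Filter Topology MeasureTheory in
lemma erf_bounds (s : ℝ) (hs : 0 ≤ s) : 1 - Real.exp (-s ^ 2) ≤ erf s ∧ erf s ≤ 1 := by
  have hintg : Integrable (fun u : ℝ => Real.exp (-u ^ 2)) := by
    simpa using integrable_exp_neg_mul_sq (b := 1) one_pos
  have hI0 : ∫ u in Ioi (0:ℝ), Real.exp (-u ^ 2) = Real.sqrt Real.pi / 2 := by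
    simpa using integral_gaussian_Ioi 1
  have hsplit : (∫ u in (0:ℝ)..s, Real.exp (-u ^ 2)) =
      (∫ u in Ioi (0:ℝ), Real.exp (-u ^ 2)) - ∫ u in Ioi s, Real.exp (-u ^ 2) := by
    have := intervalIntegral.integral_interval_add_Ioi (a := 0) (b := s)
      (f := fun u : ℝ => Real.exp (-u ^ 2)) hintg.integrableOn hintg.integrableOn
    linarith
  have hshift : (∫ u in Ioi s, Real.exp (-u ^ 2)) = ∫ u in Ioi (0:ℝ), Real.exp (-(u + s) ^ 2) := by
    rw [← integral_indicator measurableSet_Ioi, ← integral_indicator measurableSet_Ioi,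
      ← integral_add_right_eq_self _ s]
    congr 1
    ext u
    simp [Set.indicator]
  have hle : (∫ u in Ioi (0:ℝ), Real.exp (-(u + s) ^ 2)) ≤
      ∫ u in Ioi (0:ℝ), Real.exp (-s ^ 2) * Real.exp (-u ^ 2) := by
    apply setIntegral_mono_on
    · exact (hintg.comp_add_right s).integrableOn
    · exact (hintg.const_mul _).integrableOn
    · exact measurableSet_Ioi
    · intro u hu
      rw [← Real.exp_add]
      apply Real.exp_le_exp.2
      have : 0 < u := hu
      nlinarith [mul_nonneg this.le hs]
  rw [integral_const_mul, hI0] at hle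
  have hpos : 0 ≤ ∫ u in Ioi s, Real.exp (-u ^ 2) :=
    integral_nonneg fun u => (Real.exp_pos _).le
  have hpi : 0 < Real.sqrt Real.pi := Real.sqrt_pos.2 Real.pi_pos
  unfold erf
  rw [hsplit, hI0]
  rw [← hshift] at hle
  set J := ∫ u in Ioi s, Real.exp (-u ^ 2)
  have e : 2 / √π * (√π / 2 - J) = 1 - 2 * J / √π := by field_simp
  rw [e]
  constructor
  · have : 2 * J / √π ≤ Real.exp (-s ^ 2) := by
      rw [div_le_iff₀ hpi]; linarith
    linarith
  · have : 0 ≤ 2 * J / √π := by positivity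
    linarith

/-- `z(x) = √(2 log(1/x))`. -/
noncomputable def zz (x : ℝ) : ℝ := Real.sqrt (2 * Real.log (1 / x))

lemma erf_log_bounds (x : ℝ) (h0 : 0 < x) (h1 : x ≤ 1) :
    1 - x ≤ erf (Real.sqrt (Real.log (1 / x))) ∧ erf (Real.sqrt (Real.log (1 / x))) ≤ 1 := by
  have hl : 0 ≤ Real.log (1 / x) := Real.log_nonneg (by rw [le_div_iff₀ h0]; linarith)
  have := erf_bounds (Real.sqrt (Real.log (1 / x))) (Real.sqrt_nonneg _)
  rw [Real.sq_sqrt hl] at this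
  rwa [one_div, Real.log_inv, neg_neg, Real.exp_log h0, ← Real.log_inv, ← one_div] at this

lemma zz_hasDerivAt (x : ℝ) (h0 : 0 < x) (h1 : x < 1) :
    HasDerivAt zz (-1 / (x * zz x)) x := by
  have hl : 0 < Real.log (1 / x) := Real.log_pos (by rw [lt_div_iff₀ h0]; linarith)
  have h := (((Real.hasDerivAt_log h0.ne').neg).const_mul 2).sqrt
    (by simp only [one_div, Real.log_inv] at hl; simp only [Pi.neg_apply]; exact (mul_pos two_pos hl).ne')
  have e : zz = fun y => Real.sqrt (2 * (-Real.log) y) := by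
    ext y; simp [zz]
  have hz : 0 < zz x := Real.sqrt_pos.2 (by positivity)
  have e2 : Real.sqrt (2 * (-Real.log) x) = zz x := by rw [e]
  rw [e2] at h
  rw [e] at hz ⊢
  convert h using 1
  rw [← e]
  rw [← e] at hz
  field_simp

lemma hB_hasDerivAt (N : ℕ) (x : ℝ) (h0 : 0 < x) (h1 : x < 1) :
    HasDerivAt (hB N) (zz x + ((N : ℝ) - 1) * Real.sqrt (Real.pi / 2)) x := by
  have hl : 0 < Real.log (1 / x) := Real.log_pos (by rw [lt_div_iff₀ h0]; linarith)
  have hz := zz_hasDerivAt x h0 h1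
  have hzp : 0 < zz x := Real.sqrt_pos.2 (by positivity)
  have hs : HasDerivAt (fun y => zz y / Real.sqrt 2) (-1 / (x * zz x) / Real.sqrt 2) x :=
    hz.div_const _
  have he := (erf_hasDerivAt (zz x / Real.sqrt 2)).comp x hs
  have hsq : (zz x / Real.sqrt 2) ^ 2 = Real.log (1 / x) := by
    rw [div_pow, zz, Real.sq_sqrt (by positivity), Real.sq_sqrt (by norm_num)]; ring
  have hexp : Real.exp (-(zz x / Real.sqrt 2) ^ 2) = x := by
    rw [hsq, one_div, Real.log_inv, neg_neg, Real.exp_log h0]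
  rw [hexp] at he
  have htot := (((hasDerivAt_id x).mul hz).sub (he.const_mul (Real.sqrt (Real.pi / 2)))).add
    (((hasDerivAt_id x).mul_const ((N : ℝ) - 1)).mul_const (Real.sqrt (Real.pi / 2)))
  have hpi : 0 < Real.sqrt Real.pi := Real.sqrt_pos.2 Real.pi_pos
  have h2 : 0 < Real.sqrt 2 := by positivity
  have h22 : Real.sqrt 2 * Real.sqrt 2 = 2 := Real.mul_self_sqrt (by norm_num)
  have hval : zz x + ((N : ℝ) - 1) * Real.sqrt (Real.pi / 2) =
      1 * zz x + id x * (-1 / (x * zz x)) - Real.sqrt (Real.pi / 2) *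
        (2 / Real.sqrt Real.pi * x * (-1 / (x * zz x) / Real.sqrt 2)) +
        1 * ((N : ℝ) - 1) * Real.sqrt (Real.pi / 2) := by
    have : Real.sqrt (Real.pi / 2) *
        (2 / Real.sqrt Real.pi * x * (-1 / (x * zz x) / Real.sqrt 2)) = -1 / zz x := by
      rw [Real.sqrt_div Real.pi_pos.le]
      field_simp
      rw [Real.sq_sqrt (by norm_num)]
    rw [this]
    simp only [id]
    field_simp
    ring
  rw [hval]
  refine htot.congr_of_eventuallyEq ?_
  filter_upwards [eventually_ne_nhds h0.ne'] with y hy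
  simp only [hB, hy, if_false, zz, Pi.add_apply, Pi.sub_apply, Pi.mul_apply, id,
    Function.comp]
  rw [Real.sqrt_mul (by norm_num : (0:ℝ) ≤ 2), mul_div_cancel_left₀ _ h2.ne']

open Set Filter Topology in
lemma mul_zz_continuousOn : ContinuousOn (fun x => x * zz x) (Icc 0 1) := by
  have : ContinuousOn (fun x => Real.sqrt x * Real.sqrt (2 * Real.negMulLog x)) (Icc 0 1) := by
    have := Real.continuous_negMulLog
    fun_prop
  refine this.congr ?_
  intro x hx
  simp only [zz]
  have e : 2 * Real.negMulLog x = x * (2 * Real.log (1 / x)) := by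
    simp [Real.negMulLog]; ring
  rw [e, Real.sqrt_mul hx.1, ← mul_assoc, Real.mul_self_sqrt hx.1]

open Set Filter Topology in
lemma hB_continuousOn (N : ℕ) : ContinuousOn (hB N) (Icc 0 1) := by
  have key : ContinuousOn (fun x => if x = 0 then (1:ℝ) else erf (Real.sqrt (Real.log (1 / x))))
      (Icc 0 1) := by
    intro x hx
    rcases eq_or_lt_of_le hx.1 with h | h
    · subst h
      unfold ContinuousWithinAt
      simp only [if_true]
      have t1 : Tendsto (fun x : ℝ => 1 - x) (𝓝[Icc 0 1] 0) (𝓝 1) := by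
        have : Continuous fun x : ℝ => 1 - x := by fun_prop
        simpa using (this.tendsto 0).mono_left nhdsWithin_le_nhds
      refine tendsto_of_tendsto_of_tendsto_of_le_of_le' t1 tendsto_const_nhds ?_ ?_
      all_goals
        filter_upwards [self_mem_nhdsWithin] with y hy
        split_ifs with h
        · linarith [hy.1]
        · have := erf_log_bounds y (lt_of_le_of_ne hy.1 (Ne.symm h)) hy.2
          linarith
    · apply ContinuousAt.continuousWithinAt
      have : ContinuousAt (fun x => erf (Real.sqrt (Real.log (1 / x)))) x := by
        apply erf_continuous.continuousAt.comp
        apply Real.continuous_sqrt.continuousAt.comp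
        apply ContinuousAt.log
        · exact continuousAt_const.div continuousAt_id h.ne'
        · positivity
      refine this.congr ?_
      filter_upwards [eventually_ne_nhds h.ne'] with y hy
      simp [hy]
  have : ContinuousOn (fun x => x * zz x - Real.sqrt (Real.pi / 2) *
      (if x = 0 then (1:ℝ) else erf (Real.sqrt (Real.log (1 / x)))) +
      x * ((N : ℝ) - 1) * Real.sqrt (Real.pi / 2)) (Icc 0 1) := by
    have := mul_zz_continuousOn
    exact (this.sub (key.const_mul _ )).add (by fun_prop)
  refine this.congr ?_
  intro x hx
  by_cases h : x = 0 <;> simp [hB, h, zz]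

lemma sum_mul_zz_le {N : ℕ} (hN : 2 ≤ N) (w : Fin N → ℝ) (hw : w ∈ stdSimplex ℝ (Fin N)) :
    ∑ i, w i * zz (w i) ≤ Real.sqrt (2 * Real.log N) := by
  have hle1 : ∀ i, w i ≤ 1 := fun i => (mem_Icc_of_mem_stdSimplex hw i).2
  have h0 := hw.1
  have hN0 : (0:ℝ) < N := by positivity
  have hlog : ∀ i, 0 ≤ Real.log (1 / w i) := fun i => by
    rw [one_div, Real.log_inv]
    have := Real.log_nonpos (h0 i) (hle1 i)
    linarith
  apply Real.le_sqrt_of_sq_le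
  have hcs : (∑ i, w i * zz (w i)) ^ 2 ≤ (∑ i, w i) * ∑ i, w i * (2 * Real.log (1 / w i)) := by
    apply Finset.sum_sq_le_sum_mul_sum_of_sq_le_mul
    · intro i _; exact h0 i
    · intro i _; exact mul_nonneg (h0 i) (mul_nonneg (by norm_num) (hlog i))
    · intro i _
      refine le_of_eq ?_
      rw [mul_pow, zz, Real.sq_sqrt (mul_nonneg (by norm_num) (hlog i))]; ring
  rw [hw.2, one_mul] at hcs
  refine hcs.trans ?_
  have hi : ∀ i, w i * (2 * Real.log (1 / w i)) ≤
      2 * (w i * Real.log N + (1 / (N:ℝ) - w i)) := by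
    intro i
    rcases eq_or_lt_of_le (h0 i) with h | h
    · rw [← h]; simp
    · have := Real.log_le_sub_one_of_pos (x := 1 / (N * w i)) (by positivity)
      rw [one_div, Real.log_inv, Real.log_mul hN0.ne' h.ne'] at this
      rw [one_div (w i), Real.log_inv]
      have h2 := mul_le_mul_of_nonneg_left this h.le
      have h3 : w i * ((N * w i)⁻¹ - 1) = 1 / (N:ℝ) - w i := by field_simp
      rw [h3] at h2
      linarith
  refine (Finset.sum_le_sum fun i _ => hi i).trans ?_
  rw [← Finset.mul_sum, Finset.sum_add_distrib, Finset.sum_sub_distrib, ← Finset.sum_mul, hw.2]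
  simp [hN0.ne']

lemma HB_le {N : ℕ} (hN : 2 ≤ N) (w : Fin N → ℝ) (hw : w ∈ stdSimplex ℝ (Fin N)) :
    HB w ≤ Real.sqrt (2 * Real.log N) := by
  refine le_trans ?_ (sum_mul_zz_le hN w hw)
  have hi : ∀ i, hB N (w i) ≤ w i * zz (w i) + Real.sqrt (Real.pi / 2) * (N * w i - 1) := by
    intro i
    have hp : 0 ≤ Real.sqrt (Real.pi / 2) := Real.sqrt_nonneg _
    by_cases h : w i = 0
    · simp [hB, h]
    · have := (erf_log_bounds (w i) (lt_of_le_of_ne (hw.1 i) (Ne.symm h))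
        (mem_Icc_of_mem_stdSimplex hw i).2).1
      simp only [hB, h, if_false, zz]
      have := mul_le_mul_of_nonneg_left this hp
      linarith
  refine (Finset.sum_le_sum fun i _ => hi i).trans ?_
  rw [Finset.sum_add_distrib, ← Finset.mul_sum, Finset.sum_sub_distrib, ← Finset.mul_sum, hw.2]
  simp

lemma HB_single {N : ℕ} (i : Fin N) : HB (Pi.single i (1:ℝ)) = 0 := by
  unfold HB
  rw [← Finset.add_sum_erase _ _ (Finset.mem_univ i)]
  have : ∀ j ∈ Finset.univ.erase i, hB N ((Pi.single i (1:ℝ) : Fin N → ℝ) j) =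
      -Real.sqrt (Real.pi / 2) := by
    intro j hj
    have : j ≠ i := Finset.ne_of_mem_erase hj
    simp [hB, this]
  rw [Finset.sum_congr rfl this]
  have hN : 1 ≤ N := i.pos
  simp [hB, erf, Finset.card_erase_of_mem, Nat.cast_sub hN]

open Set in
/-- Strong concavity of `HB` along segments. -/
lemma HB_strong {N : ℕ} (hN : 2 ≤ N) (w v : Fin N → ℝ) (hw : w ∈ stdSimplex ℝ (Fin N))
    (hv : v ∈ stdSimplex ℝ (Fin N)) (s : ℝ) (hs : s ∈ Ioo (0:ℝ) 1) :
    (1 - s) * HB w + s * HB v +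
      (∑ i, |v i - w i|) ^ 2 / Real.sqrt (2 * Real.log N) / 2 * (s * (1 - s))
      ≤ HB (fun i => w i + s * (v i - w i)) := by
  set K := Real.sqrt (2 * Real.log N) with hK
  have hKpos : 0 < K := Real.sqrt_pos.2 (mul_pos two_pos (Real.log_pos (by exact_mod_cast hN)))
  set C := (∑ i, |v i - w i|) ^ 2 / K with hC
  have hseg : ∀ r ∈ Icc (0:ℝ) 1, (fun i => w i + r * (v i - w i)) ∈ stdSimplex ℝ (Fin N) := by
    intro r hr
    refine ⟨fun i => ?_, ?_⟩
    · have := mul_nonneg (sub_nonneg.2 hr.2) (hw.1 i)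
      have := mul_nonneg hr.1 (hv.1 i)
      simp only
      nlinarith
    · rw [Finset.sum_add_distrib, ← Finset.mul_sum, Finset.sum_sub_distrib, hw.2, hv.2]; ring
  have hw1 : ∀ i, w i ≤ 1 := fun i => (mem_Icc_of_mem_stdSimplex hw i).2
  have hv1 : ∀ i, v i ≤ 1 := fun i => (mem_Icc_of_mem_stdSimplex hv i).2
  have hintg : ∀ r ∈ Ioo (0:ℝ) 1, ∀ i, v i ≠ w i →
      0 < w i + r * (v i - w i) ∧ w i + r * (v i - w i) < 1 := by
    intro r hr i hi
    have a1 := hw.1 i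
    have a2 := hv.1 i
    have a3 := hw1 i
    have a4 := hv1 i
    rcases lt_or_gt_of_ne hi with h | h
    · constructor <;> nlinarith [hr.1, hr.2, mul_pos hr.1 (sub_pos.2 h),
        mul_pos (sub_pos.2 hr.2) (sub_pos.2 h)]
    · constructor <;> nlinarith [hr.1, hr.2, mul_pos hr.1 (sub_pos.2 h),
        mul_pos (sub_pos.2 hr.2) (sub_pos.2 h)]
  set c0 := ((N : ℝ) - 1) * Real.sqrt (Real.pi / 2) with hc0
  have hconc : ConcaveOn ℝ (Icc (0:ℝ) 1)
      (fun r => (∑ i, hB N (w i + r * (v i - w i))) + C / 2 * r ^ 2) := by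
    refine concaveOn_of_hasDerivWithinAt2_nonpos (convex_Icc 0 1)
      (f' := fun r => (∑ i, (zz (w i + r * (v i - w i)) + c0) * (v i - w i)) + C * r)
      (f'' := fun r => (∑ i, -((v i - w i) ^ 2 /
        ((w i + r * (v i - w i)) * zz (w i + r * (v i - w i))))) + C) ?_ ?_ ?_ ?_
    · refine ContinuousOn.add ?_ (by fun_prop)
      refine continuousOn_finsetSum _ fun i _ => ?_
      refine (hB_continuousOn N).comp (by fun_prop) ?_
      intro r hr
      exact mem_Icc_of_mem_stdSimplex (hseg r hr) i
    · intro r hr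
      rw [interior_Icc] at hr
      apply HasDerivAt.hasDerivWithinAt
      refine HasDerivAt.add ?_ ?_
      · refine HasDerivAt.fun_sum fun i _ => ?_
        by_cases h : v i = w i
        · simp only [h, sub_self, mul_zero]; exact hasDerivAt_const _ _
        · obtain ⟨p, q⟩ := hintg r hr i h
          have hd : HasDerivAt (fun r => w i + r * (v i - w i)) (v i - w i) r := by
            simpa using ((hasDerivAt_id r).mul_const (v i - w i)).const_add (w i)
          exact (hB_hasDerivAt N _ p q).comp r hd
      · have := (hasDerivAt_pow 2 r).const_mul (C / 2)
        refine this.congr_deriv ?_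
        norm_num
        ring
    · intro r hr
      rw [interior_Icc] at hr
      apply HasDerivAt.hasDerivWithinAt
      refine HasDerivAt.add ?_ ?_
      · refine HasDerivAt.fun_sum fun i _ => ?_
        by_cases h : v i = w i
        · simp only [h, sub_self, mul_zero]; simpa using hasDerivAt_const r (0:ℝ)
        · obtain ⟨p, q⟩ := hintg r hr i h
          have hd : HasDerivAt (fun r => w i + r * (v i - w i)) (v i - w i) r := by
            simpa using ((hasDerivAt_id r).mul_const (v i - w i)).const_add (w i)
          have := (((zz_hasDerivAt _ p q).comp r hd).add_const c0).mul_const (v i - w i)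
          refine this.congr_deriv ?_
          ring
      · simpa using (hasDerivAt_id r).const_mul C
    · intro r hr
      rw [interior_Icc] at hr
      have hm := hseg r ⟨hr.1.le, hr.2.le⟩
      have hq := sum_mul_zz_le hN _ hm
      rw [← hK] at hq
      have hqn : ∀ i, 0 ≤ (w i + r * (v i - w i)) * zz (w i + r * (v i - w i)) := fun i =>
        mul_nonneg (hm.1 i) (Real.sqrt_nonneg _)
      have hcs : (∑ i, |v i - w i|) ^ 2 ≤
          (∑ i, (v i - w i) ^ 2 / ((w i + r * (v i - w i)) * zz (w i + r * (v i - w i)))) *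
          ∑ i, (w i + r * (v i - w i)) * zz (w i + r * (v i - w i)) := by
        apply Finset.sum_sq_le_sum_mul_sum_of_sq_le_mul
        · intro i _; exact div_nonneg (sq_nonneg _) (hqn i)
        · intro i _; exact hqn i
        · intro i _
          by_cases h : v i = w i
          · simp [h]
          · obtain ⟨p, q⟩ := hintg r hr i h
            have hz : 0 < zz (w i + r * (v i - w i)) :=
              Real.sqrt_pos.2 (mul_pos two_pos (Real.log_pos (by
                rw [lt_div_iff₀ p]; linarith)))
            rw [sq_abs, div_mul_cancel₀ _ (mul_pos p hz).ne']
      have hn : 0 ≤ ∑ i, (v i - w i) ^ 2 /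
          ((w i + r * (v i - w i)) * zz (w i + r * (v i - w i))) :=
        Finset.sum_nonneg fun i _ => div_nonneg (sq_nonneg _) (hqn i)
      have := hcs.trans (mul_le_mul_of_nonneg_left hq hn)
      rw [← div_le_iff₀ hKpos] at this
      simp only [Finset.sum_neg_distrib]
      linarith
  have := hconc.2 (left_mem_Icc.2 zero_le_one) (right_mem_Icc.2 zero_le_one)
    (sub_nonneg.2 hs.2.le) hs.1.le (by ring)
  simp only [smul_eq_mul, mul_zero, mul_one, zero_mul, add_zero, zero_add, one_mul,
    add_sub_cancel] at this
  simp only [HB]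
  nlinarith

lemma argmin_strong {N : ℕ} (hN : 2 ≤ N) (L w v : Fin N → ℝ) (a : ℝ) (ha : 0 ≤ a)
    (hw : w ∈ stdSimplex ℝ (Fin N)) (hv : v ∈ stdSimplex ℝ (Fin N))
    (hmin : ∀ u ∈ stdSimplex ℝ (Fin N),
      (∑ i, L i * w i) - a * HB w ≤ (∑ i, L i * u i) - a * HB u) :
    (∑ i, L i * w i) - a * HB w +
      a * ((∑ i, |v i - w i|) ^ 2 / Real.sqrt (2 * Real.log N) / 2)
      ≤ (∑ i, L i * v i) - a * HB v := by
  set D := (∑ i, |v i - w i|) ^ 2 / Real.sqrt (2 * Real.log N) / 2 with hD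
  have key : ∀ s ∈ Set.Ioo (0:ℝ) 1, (∑ i, L i * w i) - a * HB w + a * D * (1 - s)
      ≤ (∑ i, L i * v i) - a * HB v := by
    intro s hs
    have h1 := mul_le_mul_of_nonneg_left (HB_strong hN w v hw hv s hs) ha
    rw [← hD] at h1
    have h2 := hmin (fun i => w i + s * (v i - w i)) (by
      refine ⟨fun i => ?_, ?_⟩
      · have := mul_nonneg (sub_nonneg.2 hs.2.le) (hw.1 i)
        have := mul_nonneg hs.1.le (hv.1 i)
        simp only
        nlinarith
      · rw [Finset.sum_add_distrib, ← Finset.mul_sum, Finset.sum_sub_distrib, hw.2, hv.2]; ring)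
    have h3 : ∑ i, L i * (w i + s * (v i - w i)) =
        (1 - s) * (∑ i, L i * w i) + s * ∑ i, L i * v i := by
      rw [Finset.mul_sum, Finset.mul_sum, ← Finset.sum_add_distrib]
      exact Finset.sum_congr rfl fun i _ => by ring
    rw [h3] at h2
    refine le_of_mul_le_mul_left ?_ hs.1
    linarith
  have hlim : Filter.Tendsto (fun s : ℝ => (∑ i, L i * w i) - a * HB w + a * D * (1 - s))
      (nhdsWithin 0 (Set.Ioi 0)) (nhds ((∑ i, L i * w i) - a * HB w + a * D)) := by
    have : Continuous fun s : ℝ => (∑ i, L i * w i) - a * HB w + a * D * (1 - s) := by fun_prop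
    simpa using (this.tendsto 0).mono_left nhdsWithin_le_nhds
  refine le_of_tendsto hlim ?_
  filter_upwards [Ioo_mem_nhdsGT (zero_lt_one' ℝ)] with s hs using key s hs

lemma holder_half {N : ℕ} (l w v : Fin N → ℝ) (hl : ∀ i, l i ∈ Set.Icc (0:ℝ) 1)
    (hw : w ∈ stdSimplex ℝ (Fin N)) (hv : v ∈ stdSimplex ℝ (Fin N)) :
    (∑ i, l i * w i) - ∑ i, l i * v i ≤ (∑ i, |v i - w i|) / 2 := by
  have e : (∑ i, l i * w i) - ∑ i, l i * v i = ∑ i, (1 / 2 - l i) * (v i - w i) := by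
    have : ∀ i, (1 / 2 - l i) * (v i - w i) = 1 / 2 * v i - 1 / 2 * w i + (l i * w i - l i * v i) :=
      fun i => by ring
    simp only [this]
    rw [Finset.sum_add_distrib, Finset.sum_sub_distrib, Finset.sum_sub_distrib,
      ← Finset.mul_sum, ← Finset.mul_sum, hw.2, hv.2]
    ring
  rw [e, Finset.sum_div]
  refine Finset.sum_le_sum fun i _ => ?_
  have h := hl i
  calc _ ≤ |(1 / 2 - l i) * (v i - w i)| := le_abs_self _
    _ = |1 / 2 - l i| * |v i - w i| := abs_mul _ _
    _ ≤ 1 / 2 * |v i - w i| := by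
      gcongr
      rw [abs_le]; constructor <;> linarith [h.1, h.2]
    _ = _ := by ring

lemma carl_inv (N : ℕ) (hN : 2 ≤ N) (ℓ : ℕ → Fin N → ℝ)
    (hℓ : ∀ t i, ℓ t i ∈ Set.Icc (0 : ℝ) 1)
    (w : ℕ → Fin N → ℝ) (hw : IsCarl N 2 ℓ w) (T : ℕ) :
    ∀ v ∈ stdSimplex ℝ (Fin N), (∑ t ∈ Finset.Icc 1 T, ∑ i, ℓ t i * w t i) ≤
      (∑ i, (∑ s ∈ Finset.Icc 1 T, ℓ s i) * v i) - Real.sqrt T / 2 * HB v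
        + Real.sqrt (2 * Real.log N) * Real.sqrt T := by
  induction T with
  | zero => intro v hv; simp
  | succ T ih =>
    intro v hv
    obtain ⟨hm, hmin⟩ := hw T
    have h1 := ih _ hm
    have h2 := argmin_strong hN (fun i => ∑ s ∈ Finset.Icc 1 T, ℓ s i) _ v _
      (by positivity : 0 ≤ Real.sqrt ((T:ℝ) + 1) / 2) hm hv hmin
    have h3 := holder_half (ℓ (T + 1)) _ v (hℓ (T + 1)) hm hv
    have h4 := HB_le hN _ hm
    rw [Finset.sum_Icc_succ_top (by omega)]
    have e : ∑ i, (∑ s ∈ Finset.Icc 1 (T + 1), ℓ s i) * v i =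
        (∑ i, (∑ s ∈ Finset.Icc 1 T, ℓ s i) * v i) + ∑ i, ℓ (T + 1) i * v i := by
      rw [← Finset.sum_add_distrib]
      refine Finset.sum_congr rfl fun i _ => ?_
      rw [Finset.sum_Icc_succ_top (by omega)]; ring
    rw [e]
    push_cast
    set K := Real.sqrt (2 * Real.log N) with hK
    have hKpos : 0 < K := Real.sqrt_pos.2 (mul_pos two_pos (Real.log_pos (by exact_mod_cast hN)))
    set b := Real.sqrt ((T:ℝ) + 1) with hb
    set c := Real.sqrt (T:ℝ) with hc
    have hbpos : 0 < b := Real.sqrt_pos.2 (by positivity)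
    have hcn : 0 ≤ c := Real.sqrt_nonneg _
    have hcb : c ≤ b := Real.sqrt_le_sqrt (by linarith)
    have hbb : b ^ 2 = T + 1 := Real.sq_sqrt (by positivity)
    have hcc : c ^ 2 = T := Real.sq_sqrt (by positivity)
    set d := ∑ i, |v i - w (T + 1) i|
    have h5 : (b - c) / 2 * HB (w (T + 1)) ≤ (b - c) / 2 * K :=
      mul_le_mul_of_nonneg_left h4 (by linarith)
    have h6 : d / 2 ≤ b / 2 * (d ^ 2 / K / 2) + K / (4 * b) := by
      have : b / 2 * (d ^ 2 / K / 2) + K / (4 * b) - d / 2 = (b * d - K) ^ 2 / (4 * K * b) := by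
        field_simp; ring
      have : 0 ≤ (b * d - K) ^ 2 / (4 * K * b) := by positivity
      linarith
    have h7 : K / (4 * b) ≤ K * ((b - c) / 2) := by
      rw [div_eq_mul_one_div]
      refine mul_le_mul_of_nonneg_left ?_ hKpos.le
      rw [div_le_iff₀ (by positivity)]
      nlinarith
    linarith

/-- for any losses in `[0,1]^N` (`N ≥ 2`) and any `T`, FTRL-CARL (with
regularizer `−H_B` and regularizer scaling `η_t = 2/√t`) satisfies the deterministic
regret bound `Σ_{t=1}^T ⟨ℓ_t, w_t⟩ − min_i Σ_{t=1}^T ℓ_t(i) ≤ √(2·T·log N)`. -/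
theorem stmt4 (N : ℕ) (hN : 2 ≤ N) (ℓ : ℕ → Fin N → ℝ)
    (hℓ : ∀ t i, ℓ t i ∈ Set.Icc (0 : ℝ) 1)
    (w : ℕ → Fin N → ℝ) (hw : IsCarl N 2 ℓ w) (T : ℕ) :
    (∑ t ∈ Finset.Icc 1 T, ∑ i, ℓ t i * w t i)
        - sInf (Set.range fun i => ∑ t ∈ Finset.Icc 1 T, ℓ t i) ≤
      Real.sqrt (2 * T * Real.log N) := by
  have hK : Real.sqrt (2 * T * Real.log N) = Real.sqrt (2 * Real.log N) * Real.sqrt T := by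
    rw [mul_right_comm, Real.sqrt_mul' _ (Nat.cast_nonneg T)]
  have hne : (Set.range fun i : Fin N => ∑ t ∈ Finset.Icc 1 T, ℓ t i).Nonempty :=
    ⟨_, ⟨⟨0, by omega⟩, rfl⟩⟩
  have : (∑ t ∈ Finset.Icc 1 T, ∑ i, ℓ t i * w t i) - Real.sqrt (2 * T * Real.log N) ≤
      sInf (Set.range fun i => ∑ t ∈ Finset.Icc 1 T, ℓ t i) := by
    refine le_csInf hne ?_
    rintro _ ⟨i, rfl⟩
    have h := carl_inv N hN ℓ hℓ w hw T (Pi.single i 1) (single_mem_stdSimplex ℝ i)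
    rw [HB_single] at h
    simp only [Pi.single_apply, mul_ite, mul_one, mul_zero, Finset.sum_ite_eq',
      Finset.mem_univ, if_true] at h
    rw [hK]
    simp only
    linarith
  linarith
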